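/- For any sequence D = (D_n)_{n=1}^∞ of nonempty open subsets of [0,1] forming a base for the topology of [0,1], the space X_D = (C[0,1], ‖·‖_D) is midpoint locally uniformly rotund: for every x with ‖x‖_D = 1 and every sequence (y_k) in C[0,1] with ‖x ± y_k‖_D → 1, one has ‖y_k‖_D → 0. -/

import Mathlib

open Set Filter Topology

/-- The `n`-th seminorm: `‖x‖ₙ = sup_{d ∈ Dₙ} |x d|`. -/
noncomputable def seminormD (D : ℕ → Set (Icc (0:ℝ) 1)) (n : ℕ)
    (x : C(Icc (0:ℝ) 1, ℝ)) : ℝ :=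
  ⨆ d : D n, |x d|

/-- The norm `‖x‖_D = (Σₙ 2⁻ⁿ ‖x‖ₙ²)^{1/2}` (indexing the sequence from `0`,
with weight `2^{-(n+1)}`). -/
noncomputable def normD (D : ℕ → Set (Icc (0:ℝ) 1)) (x : C(Icc (0:ℝ) 1, ℝ)) : ℝ :=
  Real.sqrt (∑' n : ℕ, (1 / 2 : ℝ) ^ (n + 1) * (seminormD D n x) ^ 2)

/-!
If `‖x ± yₖ‖ → ‖x‖` for an `ℓ²`-combination of seminorms, the convexity defects
`p (x + yₖ)² + p (x - yₖ)² - 2 p(x)²` of all the seminorms `p` tend to zero, and hence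
`p (x ± yₖ) → p x`. When `p` is the supremum over a basic open set `U` on which `|x|` oscillates by
at most `ε`, the identity `|a| + |b| = max |a + b| |a - b|` bounds `|yₖ|` on `U` by
`max (p (x + yₖ)) (p (x - yₖ)) - p x + ε`. So `yₖ → 0` locally uniformly, which is uniform
convergence by compactness.
-/

section WeightedL2

variable {ι E α : Type*} [AddCommGroup E] [Module ℝ E]

/-- The `ℓ²`-combination `(∑ᵢ wᵢ pᵢ(x)²)^{1/2}` of a family of seminorms with weights `w`, the
abstract form of `‖·‖_D`. It takes the junk value `0` where the series diverges. -/
noncomputable def weightedL2 (w : ι → ℝ) (p : ι → Seminorm ℝ E) (x : E) : ℝ :=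
  √(∑' i, w i * p i x ^ 2)

variable {w : ι → ℝ} {p : ι → Seminorm ℝ E} {x : E}

theorem weightedL2_sq (hw : ∀ i, 0 ≤ w i) (x : E) :
    weightedL2 w p x ^ 2 = ∑' i, w i * p i x ^ 2 :=
  Real.sq_sqrt (tsum_nonneg fun i => mul_nonneg (hw i) (sq_nonneg _))

theorem summable_mul_sq_of_le {a : ι → ℝ} {c : ℝ} (hw : ∀ i, 0 ≤ w i) (hsum : Summable w)
    (ha : ∀ i, 0 ≤ a i) (hac : ∀ i, a i ≤ c) : Summable fun i => w i * a i ^ 2 :=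
  .of_nonneg_of_le (fun i => mul_nonneg (hw i) (sq_nonneg _))
    (fun i => mul_le_mul_of_nonneg_left (pow_le_pow_left₀ (ha i) (hac i) 2) (hw i))
    (hsum.mul_right (c ^ 2))

theorem weightedL2_le {c : ℝ} (hw : ∀ i, 0 ≤ w i) (hsum : Summable w) (hc : 0 ≤ c)
    (hpc : ∀ i, p i x ≤ c) : weightedL2 w p x ≤ √(∑' i, w i) * c := by
  have hterm (i) : w i * p i x ^ 2 ≤ w i * c ^ 2 :=
    mul_le_mul_of_nonneg_left (pow_le_pow_left₀ (apply_nonneg _ _) (hpc i) 2) (hw i)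
  calc weightedL2 w p x
      ≤ √(∑' i, w i * c ^ 2) := Real.sqrt_le_sqrt <|
        (summable_mul_sq_of_le hw hsum (fun i => apply_nonneg _ _) hpc).tsum_le_tsum hterm
          (hsum.mul_right _)
    _ = √(∑' i, w i) * c := by
        rw [tsum_mul_right, Real.sqrt_mul (tsum_nonneg hw), Real.sqrt_sq hc]

theorem two_mul_seminorm_le_add_sub (q : Seminorm ℝ E) (x y : E) :
    2 * q x ≤ q (x + y) + q (x - y) :=
  calc 2 * q x = q ((2 : ℝ) • x) := by rw [map_smul_eq_mul, Real.norm_two]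
    _ = q ((x + y) + (x - y)) := by rw [two_smul, add_add_sub_cancel]
    _ ≤ q (x + y) + q (x - y) := map_add_le_add q _ _

theorem sq_sub_add_sq_sub_le {R : Type*} [CommRing R] [LinearOrder R] [IsStrictOrderedRing R]
    {a b c : R} (ha : 0 ≤ a) (h : 2 * a ≤ b + c) :
    (b - a) ^ 2 + (c - a) ^ 2 ≤ b ^ 2 + c ^ 2 - 2 * a ^ 2 := by
  nlinarith [mul_nonneg ha (sub_nonneg.2 h)]

theorem mul_sq_seminorm_sub_le (hw : ∀ i, 0 ≤ w i)
    (hsum : ∀ z, Summable fun i => w i * p i z ^ 2) (x y : E) (i : ι) :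
    w i * (p i (x + y) - p i x) ^ 2 ≤
      weightedL2 w p (x + y) ^ 2 + weightedL2 w p (x - y) ^ 2 - 2 * weightedL2 w p x ^ 2 := by
  have hdefect (j) : w j * (p j (x + y) - p j x) ^ 2 ≤
      w j * p j (x + y) ^ 2 + w j * p j (x - y) ^ 2 - 2 * (w j * p j x ^ 2) := by
    have hconv := sq_sub_add_sq_sub_le (apply_nonneg (p j) x)
      (two_mul_seminorm_le_add_sub (p j) x y)
    have hsq := sq_nonneg (p j (x - y) - p j x)
    linarith [mul_le_mul_of_nonneg_left ((le_add_of_nonneg_right hsq).trans hconv) (hw j)]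
  have hsum_defect := ((hsum (x + y)).hasSum.add (hsum (x - y)).hasSum).sub
    ((hsum x).hasSum.mul_left 2)
  simp only [weightedL2_sq hw]
  exact (hdefect i).trans <| le_hasSum hsum_defect i fun j _ =>
    (mul_nonneg (hw j) (sq_nonneg _)).trans (hdefect j)

variable {l : Filter α} {y : α → E}

theorem tendsto_seminorm_add_of_tendsto_weightedL2 (hw : ∀ i, 0 ≤ w i)
    (hsum : ∀ z, Summable fun i => w i * p i z ^ 2)
    (hadd : Tendsto (fun k => weightedL2 w p (x + y k)) l (𝓝 (weightedL2 w p x)))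
    (hsub : Tendsto (fun k => weightedL2 w p (x - y k)) l (𝓝 (weightedL2 w p x)))
    {i : ι} (hi : 0 < w i) :
    Tendsto (fun k => p i (x + y k)) l (𝓝 (p i x)) := by
  have hdefect : Tendsto (fun k => √((weightedL2 w p (x + y k) ^ 2 + weightedL2 w p (x - y k) ^ 2
      - 2 * weightedL2 w p x ^ 2) / w i)) l (𝓝 0) := by
    have hlim := ((((hadd.pow 2).add (hsub.pow 2)).sub_const
      (2 * weightedL2 w p x ^ 2)).div_const (w i)).sqrt
    rwa [← two_mul, sub_self, zero_div, Real.sqrt_zero] at hlim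
  refine tendsto_iff_dist_tendsto_zero.2 (squeeze_zero (fun _ => dist_nonneg) (fun k => ?_) hdefect)
  exact Real.abs_le_sqrt ((le_div_iff₀' hi).2 (mul_sq_seminorm_sub_le hw hsum x (y k) i))

theorem tendsto_seminorm_sub_of_tendsto_weightedL2 (hw : ∀ i, 0 ≤ w i)
    (hsum : ∀ z, Summable fun i => w i * p i z ^ 2)
    (hadd : Tendsto (fun k => weightedL2 w p (x + y k)) l (𝓝 (weightedL2 w p x)))
    (hsub : Tendsto (fun k => weightedL2 w p (x - y k)) l (𝓝 (weightedL2 w p x)))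
    {i : ι} (hi : 0 < w i) :
    Tendsto (fun k => p i (x - y k)) l (𝓝 (p i x)) := by
  simp only [sub_eq_add_neg] at hsub ⊢
  exact tendsto_seminorm_add_of_tendsto_weightedL2 hw hsum hsub
    (by simpa only [sub_neg_eq_add] using hadd) hi

end WeightedL2

section SupSeminorm

variable {K : Type*} [TopologicalSpace K] [CompactSpace K] {S : Set K}

theorem bddAbove_range_abs_restrict (S : Set K) (x : C(K, ℝ)) :
    BddAbove (range fun d : S => |x d|) :=
  ⟨‖x‖, forall_mem_range.2 fun d => x.norm_coe_le_norm d⟩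

/-- The seminorm `x ↦ sup_{d ∈ S} |x d|` on `C(K, ℝ)`, which is `0` for `S = ∅`. -/
noncomputable def supSeminorm (S : Set K) : Seminorm ℝ C(K, ℝ) :=
  .of (fun x => ⨆ d : S, |x d|)
    (fun x y => Real.iSup_le
      (fun d => (abs_add_le _ _).trans <| add_le_add
        (le_ciSup (bddAbove_range_abs_restrict S x) d)
        (le_ciSup (bddAbove_range_abs_restrict S y) d))
      (add_nonneg (Real.iSup_nonneg fun _ => abs_nonneg _)
        (Real.iSup_nonneg fun _ => abs_nonneg _)))
    (fun a x => by
      simp only [ContinuousMap.smul_apply, smul_eq_mul, abs_mul, Real.norm_eq_abs,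
        Real.mul_iSup_of_nonneg (abs_nonneg a)])

theorem abs_apply_le_supSeminorm {s : K} (hs : s ∈ S) (x : C(K, ℝ)) : |x s| ≤ supSeminorm S x :=
  le_ciSup (bddAbove_range_abs_restrict S x) ⟨s, hs⟩

theorem supSeminorm_le {x : C(K, ℝ)} {c : ℝ} (hc : 0 ≤ c) (h : ∀ d ∈ S, |x d| ≤ c) :
    supSeminorm S x ≤ c :=
  Real.iSup_le (fun d => h d d.2) hc

theorem supSeminorm_le_norm (S : Set K) (x : C(K, ℝ)) : supSeminorm S x ≤ ‖x‖ :=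
  supSeminorm_le (norm_nonneg x) fun d _ => x.norm_coe_le_norm d

theorem abs_add_abs_eq_max {G : Type*} [AddCommGroup G] [LinearOrder G] [IsOrderedAddMonoid G]
    (a b : G) : |a| + |b| = max |a + b| |a - b| := by
  grind

theorem abs_add_abs_apply_le_max_supSeminorm {s : K} (hs : s ∈ S) (x y : C(K, ℝ)) :
    |x s| + |y s| ≤ max (supSeminorm S (x + y)) (supSeminorm S (x - y)) := by
  rw [abs_add_abs_eq_max]
  exact max_le_max (abs_apply_le_supSeminorm hs (x + y)) (abs_apply_le_supSeminorm hs (x - y))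

variable {ι α : Type*} {D : ι → Set K}

theorem exists_mem_supSeminorm_le_abs_add (hD : TopologicalSpace.IsTopologicalBasis (range D))
    (x : C(K, ℝ)) (t : K) {ε : ℝ} (hε : 0 < ε) :
    ∃ i, t ∈ D i ∧ ∀ s ∈ D i, supSeminorm (D i) x ≤ |x s| + ε := by
  have hnear : {s | |x s - x t| < ε / 2} ∈ 𝓝 t :=
    x.continuous.continuousAt.eventually (Metric.ball_mem_nhds (x t) (half_pos hε))
  obtain ⟨_, ⟨i, rfl⟩, hti, hi⟩ := hD.mem_nhds_iff.1 hnear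
  refine ⟨i, hti, fun s hs => supSeminorm_le (by positivity) fun d hd => ?_⟩
  have hds : |x d - x s| ≤ |x d - x t| + |x s - x t| := by
    simpa only [abs_sub_comm (x t)] using abs_sub_le (x d) (x t) (x s)
  have hdt : |x d - x t| < ε / 2 := hi hd
  have hst : |x s - x t| < ε / 2 := hi hs
  linarith [abs_sub_abs_le_abs_sub (x d) (x s)]

theorem tendsto_zero_of_tendsto_supSeminorm (hD : TopologicalSpace.IsTopologicalBasis (range D))
    {l : Filter α} {x : C(K, ℝ)} {y : α → C(K, ℝ)}
    (hadd : ∀ i, Tendsto (fun k => supSeminorm (D i) (x + y k)) l (𝓝 (supSeminorm (D i) x)))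
    (hsub : ∀ i, Tendsto (fun k => supSeminorm (D i) (x - y k)) l (𝓝 (supSeminorm (D i) x))) :
    Tendsto y l (𝓝 0) := by
  rw [ContinuousMap.tendsto_iff_tendstoLocallyUniformly, Metric.tendstoLocallyUniformly_iff]
  intro ε hε t
  obtain ⟨i, hti, hosc⟩ := exists_mem_supSeminorm_le_abs_add hD x t (half_pos hε)
  refine ⟨D i, (hD.isOpen (mem_range_self i)).mem_nhds hti, ?_⟩
  have hmax := (hadd i).max (hsub i)
  rw [max_self] at hmax
  filter_upwards [hmax.eventually_lt_const (lt_add_of_pos_right _ (half_pos hε))] with k hk s hs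
  rw [ContinuousMap.zero_apply, dist_zero_left, Real.norm_eq_abs]
  linarith [abs_add_abs_apply_le_max_supSeminorm hs x (y k), hosc s hs]

theorem normD_MLUR_general {w : ι → ℝ} (hw : ∀ i, 0 < w i) (hwsum : Summable w)
    (hD : TopologicalSpace.IsTopologicalBasis (range D)) {l : Filter α}
    {x : C(K, ℝ)} {y : α → C(K, ℝ)}
    (hadd : Tendsto (fun k => weightedL2 w (fun i => supSeminorm (D i)) (x + y k)) l
      (𝓝 (weightedL2 w (fun i => supSeminorm (D i)) x)))
    (hsub : Tendsto (fun k => weightedL2 w (fun i => supSeminorm (D i)) (x - y k)) l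
      (𝓝 (weightedL2 w (fun i => supSeminorm (D i)) x))) :
    Tendsto (fun k => weightedL2 w (fun i => supSeminorm (D i)) (y k)) l (𝓝 0) := by
  have hw₀ (i) : 0 ≤ w i := (hw i).le
  have hsum (z : C(K, ℝ)) : Summable fun i => w i * supSeminorm (D i) z ^ 2 :=
    summable_mul_sq_of_le hw₀ hwsum (fun i => apply_nonneg _ _)
      fun i => supSeminorm_le_norm (D i) z
  have hy : Tendsto y l (𝓝 0) := tendsto_zero_of_tendsto_supSeminorm hD
    (fun i => tendsto_seminorm_add_of_tendsto_weightedL2 hw₀ hsum hadd hsub (hw i))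
    (fun i => tendsto_seminorm_sub_of_tendsto_weightedL2 hw₀ hsum hadd hsub (hw i))
  have hbound : Tendsto (fun k => √(∑' i, w i) * ‖y k‖) l (𝓝 0) := by
    simpa only [norm_zero, mul_zero] using hy.norm.const_mul √(∑' i, w i)
  exact squeeze_zero (fun _ => Real.sqrt_nonneg _)
    (fun k => weightedL2_le hw₀ hwsum (norm_nonneg _) fun i => supSeminorm_le_norm (D i) (y k))
    hbound

end SupSeminorm

theorem normD_eq_weightedL2 (D : ℕ → Set (Icc (0 : ℝ) 1)) :
    normD D = weightedL2 (fun n => (1 / 2 : ℝ) ^ (n + 1)) (fun n => supSeminorm (D n)) :=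
  rfl

/-- For any base `D` of nonempty open sets of `[0,1]`, the space `X_D = (C[0,1], ‖·‖_D)`
is midpoint locally uniformly rotund. -/
theorem normD_MLUR (D : ℕ → Set (Icc (0:ℝ) 1))
    (hDopen : ∀ n, IsOpen (D n)) (hDne : ∀ n, (D n).Nonempty)
    (hbasis : TopologicalSpace.IsTopologicalBasis (Set.range D)) :
    ∀ x : C(Icc (0:ℝ) 1, ℝ), normD D x = 1 →
      ∀ y : ℕ → C(Icc (0:ℝ) 1, ℝ),
        Tendsto (fun k => normD D (x + y k)) atTop (𝓝 1) →
        Tendsto (fun k => normD D (x - y k)) atTop (𝓝 1) →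
        Tendsto (fun k => normD D (y k)) atTop (𝓝 0) := by
  intro x hx y hadd hsub
  rw [normD_eq_weightedL2] at hx hadd hsub ⊢
  exact normD_MLUR_general (fun n => by positivity)
    ((summable_nat_add_iff 1).2 summable_geometric_two) hbasis (by rwa [hx]) (by rwa [hx])
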